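/- Lemma 1 (single-demand converse bound): In the coded caching setup with zero-error decoding, fix ℓ ∈ {1,…,K} and a demand vector d = (d_1,…,d_K) ∈ {1,…,N}^K, and let κ_d(ℓ) := |{d_1,…,d_ℓ}| be the number of distinct demands among the first ℓ receivers. Then log₂|𝒳_d| ≥ F·κ_d(ℓ) − ∑_{k=1}^{ℓ} I(W_{d_k}; V_1,…,V_k | W_{d_1},…,W_{d_{k−1}}), where I denotes conditional mutual information (base-2) of the indicated random variables. -/

import Mathlib

/-- Probability that the discrete random variable `X` (on finite space `Ω` with
probability mass function `p`) takes the value `x`. -/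
noncomputable def pr {Ω : Type*} [Fintype Ω] {α : Type*} [DecidableEq α]
    (p : Ω → ℝ) (X : Ω → α) (x : α) : ℝ :=
  ∑ ω ∈ Finset.univ.filter (fun ω => X ω = x), p ω

/-- Shannon entropy (base 2) of the discrete random variable `X`. -/
noncomputable def ent {Ω : Type*} [Fintype Ω] {α : Type*} [DecidableEq α]
    (p : Ω → ℝ) (X : Ω → α) : ℝ :=
  -∑ x ∈ Finset.univ.image X, pr p X x * Real.logb 2 (pr p X x)

/-- Conditional mutual information `I(X;Y|Z) = H(X,Z) + H(Y,Z) − H(X,Y,Z) − H(Z)`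
(base 2). -/
noncomputable def cmi {Ω : Type*} [Fintype Ω] {α β γ : Type*}
    [DecidableEq α] [DecidableEq β] [DecidableEq γ]
    (p : Ω → ℝ) (X : Ω → α) (Y : Ω → β) (Z : Ω → γ) : ℝ :=
  ent p (fun ω => (X ω, Z ω)) + ent p (fun ω => (Y ω, Z ω))
    - ent p (fun ω => (X ω, Y ω, Z ω)) - ent p Z

section Helpers

/-- Size of the fibre of `X` through `ω`. -/
noncomputable def fib {Ω : Type*} [Fintype Ω] {α : Type*} [DecidableEq α]
    (X : Ω → α) (ω : Ω) : ℝ :=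
  ((Finset.univ.filter (fun ω' => X ω' = X ω)).card : ℝ)

lemma fib_pos {Ω : Type*} [Fintype Ω] {α : Type*} [DecidableEq α]
    (X : Ω → α) (ω : Ω) : 0 < fib X ω := by
  unfold fib
  exact_mod_cast Finset.card_pos.mpr ⟨ω, by simp⟩

lemma fib_congr {Ω : Type*} [Fintype Ω] {α β : Type*} [DecidableEq α] [DecidableEq β]
    (X : Ω → α) (Y : Ω → β) (h : ∀ a b, X a = X b ↔ Y a = Y b) (ω : Ω) :
    fib X ω = fib Y ω := by
  unfold fib
  simp only [h]

lemma sum_fiber_const {Ω : Type*} [Fintype Ω] {α : Type*} [DecidableEq α]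
    (X : Ω → α) (G : ℝ → ℝ) :
    ∑ x ∈ Finset.univ.image X,
      ((Finset.univ.filter (fun ω' => X ω' = x)).card : ℝ) *
        G ((Finset.univ.filter (fun ω' => X ω' = x)).card : ℝ)
      = ∑ ω, G (fib X ω) := by
  rw [← Finset.sum_fiberwise_of_maps_to (s := Finset.univ) (t := Finset.univ.image X) (g := X)
    (fun i _ => Finset.mem_image_of_mem X (Finset.mem_univ i))]
  refine Finset.sum_congr rfl fun x _ => ?_
  rw [Finset.sum_congr rfl (g := fun _ =>
    G ((Finset.univ.filter (fun ω' => X ω' = x)).card : ℝ))]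
  · simp
  · intro ω hω
    simp only [Finset.mem_filter, Finset.mem_univ, true_and] at hω
    unfold fib
    rw [hω]

lemma ent_eq {Ω : Type*} [Fintype Ω] [Nonempty Ω] {α : Type*} [DecidableEq α]
    (X : Ω → α) :
    ent (fun _ : Ω => (1 : ℝ) / (Fintype.card Ω : ℝ)) X
      = Real.logb 2 (Fintype.card Ω) -
        (1 / (Fintype.card Ω : ℝ)) * ∑ ω, Real.logb 2 (fib X ω) := by
  have hn : (0 : ℝ) < Fintype.card Ω := by exact_mod_cast Fintype.card_pos
  have hpr : ∀ x, pr (fun _ : Ω => (1 : ℝ) / (Fintype.card Ω : ℝ)) X x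
      = ((Finset.univ.filter (fun ω' => X ω' = x)).card : ℝ) * (1 / Fintype.card Ω) := by
    intro x
    simp [pr]
  unfold ent
  simp only [hpr]
  have := sum_fiber_const X (fun c => (1 / (Fintype.card Ω : ℝ)) *
    Real.logb 2 (c * (1 / Fintype.card Ω)))
  simp only [mul_assoc]
  rw [this]
  have h2 : ∀ ω, Real.logb 2 (fib X ω * (1 / Fintype.card Ω))
      = Real.logb 2 (fib X ω) - Real.logb 2 (Fintype.card Ω) := by
    intro ω
    rw [mul_one_div, Real.logb_div (fib_pos X ω).ne' hn.ne']
  simp only [h2]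
  rw [← Finset.mul_sum, Finset.sum_sub_distrib]
  simp only [Finset.sum_const, Finset.card_univ, nsmul_eq_mul]
  field_simp
  ring

lemma ent_congr {Ω : Type*} [Fintype Ω] [Nonempty Ω] {α β : Type*}
    [DecidableEq α] [DecidableEq β]
    (X : Ω → α) (Y : Ω → β) (h : ∀ a b, X a = X b ↔ Y a = Y b) :
    ent (fun _ : Ω => (1 : ℝ) / (Fintype.card Ω : ℝ)) X
      = ent (fun _ : Ω => (1 : ℝ) / (Fintype.card Ω : ℝ)) Y := by
  rw [ent_eq, ent_eq]
  simp only [fib_congr X Y h]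

lemma logb_le_sub {t : ℝ} (ht : 0 < t) : Real.logb 2 t ≤ (t - 1) / Real.log 2 := by
  unfold Real.logb
  have := Real.log_pos (by norm_num : (1 : ℝ) < 2)
  gcongr
  exact Real.log_le_sub_one_of_pos ht

lemma sum_inv_fib {Ω : Type*} [Fintype Ω] {α : Type*} [DecidableEq α] (X : Ω → α) :
    ∑ ω, (fib X ω)⁻¹ = ((Finset.univ.image X).card : ℝ) := by
  rw [← sum_fiber_const X (fun c => c⁻¹)]
  rw [Finset.sum_congr rfl (g := fun _ => (1 : ℝ))]
  · simp
  · intro x hx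
    obtain ⟨ω, -, rfl⟩ := Finset.mem_image.mp hx
    exact mul_inv_cancel₀ (fib_pos X ω).ne'

lemma ent_le_log_card {Ω : Type*} [Fintype Ω] [Nonempty Ω] {α : Type*} [DecidableEq α]
    [Fintype α] (X : Ω → α) :
    ent (fun _ : Ω => (1 : ℝ) / (Fintype.card Ω : ℝ)) X ≤ Real.logb 2 (Fintype.card α) := by
  have hn : (0 : ℝ) < Fintype.card Ω := by exact_mod_cast Fintype.card_pos
  have : Nonempty α := ‹Nonempty Ω›.map X
  have hm : (0 : ℝ) < Fintype.card α := by exact_mod_cast Fintype.card_pos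
  have hl := Real.log_pos (by norm_num : (1 : ℝ) < 2)
  have key : ∑ ω, Real.logb 2 ((Fintype.card Ω : ℝ) / Fintype.card α * (fib X ω)⁻¹) ≤ 0 := by
    calc _ ≤ ∑ ω, (((Fintype.card Ω : ℝ) / Fintype.card α * (fib X ω)⁻¹) - 1) / Real.log 2 :=
          Finset.sum_le_sum fun ω _ => logb_le_sub
            (mul_pos (div_pos hn hm) (inv_pos.mpr (fib_pos X ω)))
      _ = (((Fintype.card Ω : ℝ) / Fintype.card α * ((Finset.univ.image X).card : ℝ))
            - Fintype.card Ω) / Real.log 2 := by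
          rw [← Finset.sum_div, Finset.sum_sub_distrib, ← Finset.mul_sum, sum_inv_fib]
          simp
      _ ≤ 0 := by
          apply div_nonpos_of_nonpos_of_nonneg _ hl.le
          have : ((Finset.univ.image X).card : ℝ) ≤ Fintype.card α := by
            exact_mod_cast Finset.card_le_univ _
          rw [sub_nonpos, div_mul_eq_mul_div, div_le_iff₀ hm]
          gcongr
  have h2 : ∀ ω, Real.logb 2 ((Fintype.card Ω : ℝ) / Fintype.card α * (fib X ω)⁻¹)
      = Real.logb 2 (Fintype.card Ω) - Real.logb 2 (Fintype.card α)
        - Real.logb 2 (fib X ω) := by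
    intro ω
    rw [Real.logb_mul (div_pos hn hm).ne' (inv_pos.mpr (fib_pos X ω)).ne',
      Real.logb_div hn.ne' hm.ne', Real.logb_inv]
    ring
  simp only [h2] at key
  rw [Finset.sum_sub_distrib] at key
  simp only [Finset.sum_const, Finset.card_univ, nsmul_eq_mul] at key
  rw [ent_eq]
  have h3 : Real.logb 2 (Fintype.card Ω) - Real.logb 2 (Fintype.card α) ≤
      (1 / (Fintype.card Ω : ℝ)) * ∑ ω, Real.logb 2 (fib X ω) := by
    rw [one_div, inv_mul_eq_div, le_div_iff₀ hn]
    linarith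
  linarith

lemma fib_eq_sum {Ω : Type*} [Fintype Ω] {α : Type*} [DecidableEq α]
    (X : Ω → α) (ω : Ω) : fib X ω = ∑ a, if X a = X ω then (1 : ℝ) else 0 := by
  simp [fib]

lemma sum_ratio_le {Ω : Type*} [Fintype Ω] {α β γ : Type*}
    [DecidableEq α] [DecidableEq β] [DecidableEq γ]
    (X : Ω → α) (Y : Ω → β) (Z : Ω → γ) :
    ∑ ω, fib (fun ω => (X ω, Z ω)) ω * fib (fun ω => (Y ω, Z ω)) ω *
      ((fib (fun ω => (X ω, Y ω, Z ω)) ω)⁻¹ * (fib Z ω)⁻¹) ≤ Fintype.card Ω := by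
  classical
  have h1 : ∀ ω, fib (fun ω => (X ω, Z ω)) ω * fib (fun ω => (Y ω, Z ω)) ω *
      ((fib (fun ω => (X ω, Y ω, Z ω)) ω)⁻¹ * (fib Z ω)⁻¹)
      = ∑ a, ∑ b, (if (X a, Z a) = (X ω, Z ω) ∧ (Y b, Z b) = (Y ω, Z ω) then
        ((fib (fun ω => (X ω, Y ω, Z ω)) ω)⁻¹ * (fib Z ω)⁻¹) else 0) := by
    intro ω
    rw [fib_eq_sum (fun ω => (X ω, Z ω)), fib_eq_sum (fun ω => (Y ω, Z ω)),
      Finset.sum_mul_sum, Finset.sum_mul]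
    refine Finset.sum_congr rfl fun a _ => ?_
    rw [Finset.sum_mul]
    refine Finset.sum_congr rfl fun b _ => ?_
    by_cases h : (X a, Z a) = (X ω, Z ω) <;> by_cases h' : (Y b, Z b) = (Y ω, Z ω) <;>
      simp [h, h']
  simp only [h1]
  rw [Finset.sum_comm]
  have h2 : ∀ a : Ω, ∑ ω, ∑ b, (if (X a, Z a) = (X ω, Z ω) ∧ (Y b, Z b) = (Y ω, Z ω) then
        ((fib (fun ω => (X ω, Y ω, Z ω)) ω)⁻¹ * (fib Z ω)⁻¹) else 0) ≤ 1 := by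
    intro a
    rw [Finset.sum_comm]
    calc _ ≤ ∑ b, (if Z b = Z a then (1 : ℝ) else 0) * (fib Z a)⁻¹ := by
          refine Finset.sum_le_sum fun b _ => ?_
          by_cases hex : ∃ ω, (X a, Z a) = (X ω, Z ω) ∧ (Y b, Z b) = (Y ω, Z ω)
          · obtain ⟨ω₀, h0, h0'⟩ := hex
            simp only [Prod.mk.injEq] at h0 h0'
            have hz : Z b = Z a := by rw [h0'.2, h0.2]
            have heq : ∀ ω, (if (X a, Z a) = (X ω, Z ω) ∧ (Y b, Z b) = (Y ω, Z ω) then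
                ((fib (fun ω => (X ω, Y ω, Z ω)) ω)⁻¹ * (fib Z ω)⁻¹) else 0)
                = (if (X ω, Y ω, Z ω) = (X ω₀, Y ω₀, Z ω₀) then (1 : ℝ) else 0) *
                  ((fib (fun ω => (X ω, Y ω, Z ω)) ω₀)⁻¹ * (fib Z a)⁻¹) := by
              intro ω
              by_cases hω : (X ω, Y ω, Z ω) = (X ω₀, Y ω₀, Z ω₀)
              · have hω' := hω
                simp only [Prod.mk.injEq] at hω'
                rw [if_pos hω, if_pos (by
                  simp only [Prod.mk.injEq]
                  rw [h0.1, h0.2, h0'.1, h0'.2, hω'.1, hω'.2.1, hω'.2.2]; simp), one_mul]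
                have e1 : fib (fun ω => (X ω, Y ω, Z ω)) ω
                    = fib (fun ω => (X ω, Y ω, Z ω)) ω₀ := by
                  unfold fib; beta_reduce; rw [hω]
                have e2 : fib Z ω = fib Z a := by
                  unfold fib; rw [hω'.2.2, h0.2]
                rw [e1, e2]
              · rw [if_neg hω, if_neg, zero_mul]
                rintro ⟨k1, k2⟩
                simp only [Prod.mk.injEq] at k1 k2
                apply hω
                rw [← k1.1, ← k2.1, ← k1.2, h0.1, h0'.1, h0.2]
            simp only [heq]
            rw [← Finset.sum_mul, ← fib_eq_sum (fun ω => (X ω, Y ω, Z ω)) ω₀, if_pos hz,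
              mul_inv_cancel_left₀ (fib_pos _ _).ne', one_mul]
          · push Not at hex
            rw [Finset.sum_eq_zero]
            · have := (fib_pos Z a).le
              split_ifs <;> positivity
            · intro ω _
              rw [if_neg]
              rintro ⟨k1, k2⟩
              exact hex ω k1 k2
      _ = 1 := by
          rw [← Finset.sum_mul, ← fib_eq_sum, mul_inv_cancel₀ (fib_pos _ _).ne']
  calc _ ≤ ∑ _a : Ω, (1 : ℝ) := Finset.sum_le_sum fun a _ => h2 a
    _ = _ := by simp

lemma ent_submod {Ω : Type*} [Fintype Ω] [Nonempty Ω] {α β γ : Type*}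
    [DecidableEq α] [DecidableEq β] [DecidableEq γ]
    (X : Ω → α) (Y : Ω → β) (Z : Ω → γ) :
    ent (fun _ : Ω => (1 : ℝ) / (Fintype.card Ω : ℝ)) (fun ω => (X ω, Y ω, Z ω))
      + ent (fun _ : Ω => (1 : ℝ) / (Fintype.card Ω : ℝ)) Z
    ≤ ent (fun _ : Ω => (1 : ℝ) / (Fintype.card Ω : ℝ)) (fun ω => (X ω, Z ω))
      + ent (fun _ : Ω => (1 : ℝ) / (Fintype.card Ω : ℝ)) (fun ω => (Y ω, Z ω)) := by
  have hn : (0 : ℝ) < Fintype.card Ω := by exact_mod_cast Fintype.card_pos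
  have hl := Real.log_pos (by norm_num : (1 : ℝ) < 2)
  have key : ∑ ω, Real.logb 2 (fib (fun ω => (X ω, Z ω)) ω * fib (fun ω => (Y ω, Z ω)) ω *
      ((fib (fun ω => (X ω, Y ω, Z ω)) ω)⁻¹ * (fib Z ω)⁻¹)) ≤ 0 := by
    calc _ ≤ ∑ ω, ((fib (fun ω => (X ω, Z ω)) ω * fib (fun ω => (Y ω, Z ω)) ω *
      ((fib (fun ω => (X ω, Y ω, Z ω)) ω)⁻¹ * (fib Z ω)⁻¹)) - 1) / Real.log 2 :=
          Finset.sum_le_sum fun ω _ => logb_le_sub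
            (mul_pos (mul_pos (fib_pos _ _) (fib_pos _ _))
              (mul_pos (inv_pos.mpr (fib_pos _ _)) (inv_pos.mpr (fib_pos _ _))))
      _ ≤ 0 := by
          rw [← Finset.sum_div, Finset.sum_sub_distrib]
          apply div_nonpos_of_nonpos_of_nonneg _ hl.le
          have := sum_ratio_le X Y Z
          simpa using this
  have h2 : ∀ ω, Real.logb 2 (fib (fun ω => (X ω, Z ω)) ω * fib (fun ω => (Y ω, Z ω)) ω *
      ((fib (fun ω => (X ω, Y ω, Z ω)) ω)⁻¹ * (fib Z ω)⁻¹))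
      = Real.logb 2 (fib (fun ω => (X ω, Z ω)) ω) + Real.logb 2 (fib (fun ω => (Y ω, Z ω)) ω)
        - Real.logb 2 (fib (fun ω => (X ω, Y ω, Z ω)) ω) - Real.logb 2 (fib Z ω) := by
    intro ω
    have p1 := (fib_pos (fun ω => (X ω, Z ω)) ω).ne'
    have p2 := (fib_pos (fun ω => (Y ω, Z ω)) ω).ne'
    have p3 := (fib_pos (fun ω => (X ω, Y ω, Z ω)) ω).ne'
    have p4 := (fib_pos Z ω).ne'
    rw [Real.logb_mul (mul_ne_zero p1 p2) (mul_ne_zero (inv_ne_zero p3) (inv_ne_zero p4)),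
      Real.logb_mul p1 p2, Real.logb_mul (inv_ne_zero p3) (inv_ne_zero p4), Real.logb_inv,
      Real.logb_inv]
    ring
  simp only [h2] at key
  rw [Finset.sum_sub_distrib, Finset.sum_sub_distrib, Finset.sum_add_distrib] at key
  have key' := mul_le_mul_of_nonneg_left key (one_div_pos.mpr hn).le
  simp only [ent_eq]
  linarith

lemma ent_submod_congr {Ω : Type*} [Fintype Ω] [Nonempty Ω] {α β γ δ : Type*}
    [DecidableEq α] [DecidableEq β] [DecidableEq γ] [DecidableEq δ]
    (X : Ω → α) (Y : Ω → β) (Z : Ω → γ) (T : Ω → δ)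
    (h : ∀ a b, (X a, Y a, Z a) = (X b, Y b, Z b) ↔ T a = T b) :
    ent (fun _ : Ω => (1 : ℝ) / (Fintype.card Ω : ℝ)) T
      + ent (fun _ : Ω => (1 : ℝ) / (Fintype.card Ω : ℝ)) Z
    ≤ ent (fun _ : Ω => (1 : ℝ) / (Fintype.card Ω : ℝ)) (fun ω => (X ω, Z ω))
      + ent (fun _ : Ω => (1 : ℝ) / (Fintype.card Ω : ℝ)) (fun ω => (Y ω, Z ω)) := by
  rw [← ent_congr (fun ω => (X ω, Y ω, Z ω)) T h]
  exact ent_submod X Y Z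

lemma ent_mono {Ω : Type*} [Fintype Ω] [Nonempty Ω] {α γ : Type*}
    [DecidableEq α] [DecidableEq γ] (X : Ω → α) (Z : Ω → γ) :
    ent (fun _ : Ω => (1 : ℝ) / (Fintype.card Ω : ℝ)) Z
    ≤ ent (fun _ : Ω => (1 : ℝ) / (Fintype.card Ω : ℝ)) (fun ω => (X ω, Z ω)) := by
  have h := ent_submod X X Z
  rw [ent_congr (fun ω => (X ω, X ω, Z ω)) (fun ω => (X ω, Z ω))
    (by intro a b; simp)] at h
  linarith

lemma ent_restrict (N F : ℕ) {α : Type*} [DecidableEq α]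
    (S : Finset (Fin N)) (Z : (Fin N → Fin (2 ^ F)) → α)
    (hZ : ∀ a b, Z a = Z b ↔ ∀ j ∈ S, a j = b j) :
    ent (fun _ : Fin N → Fin (2 ^ F) =>
      (1 : ℝ) / (Fintype.card (Fin N → Fin (2 ^ F)) : ℝ)) Z = F * S.card := by
  classical
  have hc : ∀ ω, fib Z ω = (2 : ℝ) ^ (F * (N - S.card)) := by
    intro ω
    unfold fib
    have : (Finset.univ.filter (fun ω' => Z ω' = Z ω))
        = Fintype.piFinset (fun j => if j ∈ S then {ω j} else Finset.univ) := by
      ext a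
      simp only [Finset.mem_filter, Finset.mem_univ, true_and, hZ, Fintype.mem_piFinset]
      refine forall_congr' fun j => ?_
      by_cases hj : j ∈ S <;> simp [hj]
    rw [this, Fintype.card_piFinset]
    have h2 : ∀ j, (if j ∈ S then {ω j} else (Finset.univ : Finset (Fin (2 ^ F)))).card
        = if j ∈ Sᶜ then 2 ^ F else 1 := by
      intro j
      by_cases hj : j ∈ S <;> simp [hj]
    simp only [h2]
    rw [Finset.prod_ite_mem]
    simp [Finset.card_compl, pow_mul]
  have hS : S.card ≤ N := by simpa using Finset.card_le_univ S
  rw [ent_eq]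
  simp only [hc]
  have hcard : (Fintype.card (Fin N → Fin (2 ^ F)) : ℝ) = 2 ^ (F * N) := by
    simp [pow_mul]
  simp only [Finset.sum_const, Finset.card_univ, nsmul_eq_mul]
  rw [hcard, Real.logb_pow, Real.logb_pow, Real.logb_self_eq_one (by norm_num)]
  have : (2 : ℝ) ^ (F * N) ≠ 0 := by positivity
  push_cast [Nat.cast_sub hS]
  field_simp
  ring

end Helpers

/-- **Lemma 1 (single-demand converse bound).**
With messages i.i.d. uniform (i.e., the uniform distribution on
`Ω = Fin N → Fin (2^F)`), zero-error decoding for the demand vector `d` implies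
`log₂|𝒳_d| ≥ F·κ_d(ℓ) − ∑_{k=1}^{ℓ} I(W_{d_k}; V_1,…,V_k | W_{d_1},…,W_{d_{k−1}})`,
where `κ_d(ℓ)` is the number of distinct demands among the first `ℓ` receivers.
(The tuple `(V_1,…,V_k)` is encoded as the function `i ↦ if i < k then some (V_i) else none`,
and similarly for `(W_{d_1},…,W_{d_{k−1}})`; the index `k` below is 0-based.) -/
theorem single_demand_converse
    (N K F : ℕ) (hN : 0 < N) (hK : 0 < K) (hF : 0 < F)
    (V : Fin K → Type) [∀ k, Fintype (V k)] [∀ k, DecidableEq (V k)]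
    (𝒳 : (Fin K → Fin N) → Type) [∀ d, Fintype (𝒳 d)]
    (g : ∀ k : Fin K, (Fin N → Fin (2 ^ F)) → V k)
    (f : ∀ d : Fin K → Fin N, (Fin N → Fin (2 ^ F)) → 𝒳 d)
    (φ : ∀ (k : Fin K) (d : Fin K → Fin N), 𝒳 d → V k → Fin (2 ^ F))
    (hdec : ∀ (w : Fin N → Fin (2 ^ F)) (k : Fin K) (d : Fin K → Fin N),
      φ k d (f d w) (g k w) = w (d k))
    (d : Fin K → Fin N) (ℓ : ℕ) (hℓ1 : 1 ≤ ℓ) (hℓ2 : ℓ ≤ K) :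
    (F : ℝ) * (((Finset.univ.filter (fun i : Fin K => (i : ℕ) < ℓ)).image d).card : ℝ)
      - ∑ k : Fin ℓ,
          cmi (fun _ : Fin N → Fin (2 ^ F) =>
                (1 : ℝ) / (Fintype.card (Fin N → Fin (2 ^ F)) : ℝ))
            (fun ω => ω (d (Fin.castLE hℓ2 k)))
            (fun ω => fun i : Fin K =>
              if (i : ℕ) ≤ (k : ℕ) then some (g i ω) else none)
            (fun ω => fun j : Fin K =>
              if (j : ℕ) < (k : ℕ) then some (ω (d j)) else none)
      ≤ Real.logb 2 (Fintype.card (𝒳 d)) := by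
  have instX : ∀ d, DecidableEq (𝒳 d) := fun _ => Classical.decEq _
  have hne : Nonempty (Fin N → Fin (2 ^ F)) := ⟨fun _ => ⟨0, by positivity⟩⟩
  set Y : ℕ → (Fin N → Fin (2 ^ F)) → ((i : Fin K) → Option (V i)) := fun k ω i =>
    if (i : ℕ) < k then some (g i ω) else none with hY
  set Z : ℕ → (Fin N → Fin (2 ^ F)) → (Fin K → Option (Fin (2 ^ F))) := fun k ω j =>
    if (j : ℕ) < k then some (ω (d j)) else none with hZdef
  have Yiff : ∀ k a b, Y k a = Y k b ↔ ∀ i : Fin K, (i : ℕ) < k → g i a = g i b := by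
    intro k a b
    simp only [hY, funext_iff]
    refine forall_congr' fun i => ?_
    by_cases hi : (i : ℕ) < k <;> simp [hi]
  have Ziff : ∀ k a b, Z k a = Z k b ↔ ∀ i : Fin K, (i : ℕ) < k → a (d i) = b (d i) := by
    intro k a b
    simp only [hZdef, funext_iff]
    refine forall_congr' fun i => ?_
    by_cases hi : (i : ℕ) < k <;> simp [hi]
  set p : (Fin N → Fin (2 ^ F)) → ℝ := fun _ =>
    (1 : ℝ) / (Fintype.card (Fin N → Fin (2 ^ F)) : ℝ) with hp
  let u : ℕ → ℝ := fun k => ent p (fun ω => (f d ω, Y k ω, Z k ω))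
    - ent p (fun ω => (Y k ω, Z k ω)) + ent p (Z k)
  have succiff : ∀ (k : Fin ℓ) (P : Fin K → Prop),
      (∀ i : Fin K, (i : ℕ) < k + 1 → P i) ↔
        (P (Fin.castLE hℓ2 k) ∧ ∀ i : Fin K, (i : ℕ) < k → P i) := by
    intro k P
    constructor
    · intro h
      exact ⟨h _ (by simp), fun i hi => h i (by omega)⟩
    · rintro ⟨h1, h2⟩ i hi
      rcases Nat.lt_succ_iff_lt_or_eq.mp hi with h | h
      · exact h2 i h
      · have : i = Fin.castLE hℓ2 k := Fin.ext (by simpa using h)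
        rw [this]; exact h1
  have step : ∀ k : Fin ℓ, u (k + 1) - u k ≤
      cmi p (fun ω => ω (d (Fin.castLE hℓ2 k)))
            (fun ω => fun i : Fin K =>
              if (i : ℕ) ≤ (k : ℕ) then some (g i ω) else none)
            (fun ω => fun j : Fin K =>
              if (j : ℕ) < (k : ℕ) then some (ω (d j)) else none) := by
    intro k
    have hYk : (fun ω => fun i : Fin K =>
        if (i : ℕ) ≤ (k : ℕ) then some (g i ω) else none) = Y (k + 1) := by
      funext ω i
      simp only [hY, Nat.lt_succ_iff]
    rw [hYk]
    change _ ≤ cmi p _ _ (Z k)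
    unfold cmi
    have e1 : ent p (fun ω => (ω (d (Fin.castLE hℓ2 k)), Z k ω)) = ent p (Z (k + 1)) := by
      apply ent_congr
      intro a b
      simp only [Prod.mk.injEq, Ziff, succiff]
    have e2 : ent p (fun ω => (ω (d (Fin.castLE hℓ2 k)), Y (k + 1) ω, Z k ω))
        = ent p (fun ω => (Y (k + 1) ω, Z (k + 1) ω)) := by
      apply ent_congr
      intro a b
      simp only [Prod.mk.injEq, Ziff, succiff]
      tauto
    have e3 : ∀ a b, (f d a, Y (k + 1) a, (Y k a, Z k a)) = (f d b, Y (k + 1) b, (Y k b, Z k b))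
        ↔ (f d a, Y (k + 1) a, Z (k + 1) a) = (f d b, Y (k + 1) b, Z (k + 1) b) := by
      intro a b
      simp only [Prod.mk.injEq, Ziff, Yiff, succiff]
      constructor
      · rintro ⟨h1, ⟨h2, h3⟩, h4, h5⟩
        refine ⟨h1, ⟨h2, h3⟩, ?_, h5⟩
        rw [← hdec a, ← hdec b, h1, h2]
      · tauto
    have e4 : ent p (fun ω => (Y (k + 1) ω, (Y k ω, Z k ω)))
        = ent p (fun ω => (Y (k + 1) ω, Z k ω)) := by
      apply ent_congr
      intro a b
      simp only [Prod.mk.injEq, Ziff, Yiff, succiff]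
      tauto
    have sub := ent_submod_congr (f d) (Y (k + 1)) (fun ω => (Y k ω, Z k ω))
      (fun ω => (f d ω, Y (k + 1) ω, Z (k + 1) ω)) e3
    rw [← hp, e4] at sub
    rw [e1, e2]
    simp only [u]
    linarith
  have hsum := Finset.sum_le_sum (fun k (_ : k ∈ (Finset.univ : Finset (Fin ℓ))) => step k)
  rw [Fin.sum_univ_eq_sum_range (fun k => u (k + 1) - u k) ℓ, Finset.sum_range_sub] at hsum
  have hu0 : u 0 ≤ Real.logb 2 (Fintype.card (𝒳 d)) := by
    have a1 : ent p (fun ω => (f d ω, Y 0 ω, Z 0 ω)) = ent p (f d) := by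
      apply ent_congr
      intro a b
      simp [Ziff, Yiff]
    have a2 : ent p (fun ω => (Y 0 ω, Z 0 ω)) = ent p (Z 0) := by
      apply ent_congr
      intro a b
      simp [Ziff, Yiff]
    have a3 := ent_le_log_card (f d)
    simp only [u]
    rw [a1, a2]
    linarith
  have huL : (F : ℝ) *
      (((Finset.univ.filter (fun i : Fin K => (i : ℕ) < ℓ)).image d).card : ℝ) ≤ u ℓ := by
    rw [← ent_restrict N F _ (Z ℓ) (by intro a b; simp [Ziff])]
    have := ent_mono (f d) (fun ω => (Y ℓ ω, Z ℓ ω))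
    simp only [u]
    linarith
  linarith
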